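/- arXiv:1502.02258 — 2 statements merged into one kernel-verified Lean document; each statement's English description precedes it below -/
import Mathlib

section
/- Let f : ℝ → ℂ be continuous. Then f is Bohr almost periodic if and only if f is normal: for every sequence (x_n)_{n ∈ ℕ} of real numbers there exists a subsequence (x_{n_k}) such that the translates x ↦ f(x + x_{n_k}) converge uniformly on ℝ as k → ∞. -/
/-!
Almost periodicity and normality are both equivalent to the family of translates `x ↦ f (x + s)`,
`s : ℝ`, having finite `ε`-nets for the uniform distance (`HasTranslateNets`).

If `f` is almost periodic, subtracting an almost period moves any `s` into a fixed compact interval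
`[0, L]` at uniform cost `< ε`. This shows first that `f` is uniformly continuous, and then that a
fine enough finite net of points of `[0, L]` yields a net for all translates
(`BohrAP.hasTranslateNets`). By completeness of uniform convergence, nets give convergent
subsequences. Conversely, without an `ε`-net one picks inductively a sequence whose translates are
pairwise `ε`-separated, which contradicts normality; and if the translates by a finite set
`F ⊆ [-M, M]` form an `ε`-net, then every `s` is close to some `u ∈ F`, so `s - u` is an
`ε`-almost period, and it lies within `M` of the arbitrary number `s`.
-/

open MeasureTheory Filter Topology
open scoped ENNReal NNReal

noncomputable section

/-- `f : ℝ → ℂ` is Bohr almost periodic. -/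
def BohrAP (f : ℝ → ℂ) : Prop :=
  Continuous f ∧ ∀ ε : ℝ, 0 < ε → ∃ L : ℝ, 0 < L ∧ ∀ a : ℝ,
    ∃ τ, τ ∈ Set.Icc a (a + L) ∧ ∀ x : ℝ, ‖f (x - τ) - f x‖ < ε

/-- The Fourier coefficient of `f` at frequency `ω` equals `c`. -/
def HasFourierCoeff (f : ℝ → ℂ) (ω : ℝ) (c : ℂ) : Prop :=
  Tendsto (fun L : ℝ => (2 * (L : ℂ))⁻¹ *
      ∫ x in (-L)..L, f x * Complex.exp (((-(2 * Real.pi * ω * x) : ℝ) : ℂ) * Complex.I))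
    atTop (nhds c)

/-- `f'` is a weak derivative of `f` on `ℝ`. -/
def HasWeakDeriv (f f' : ℝ → ℂ) : Prop :=
  LocallyIntegrable f' volume ∧ ∀ x : ℝ, f x = f 0 + ∫ y in (0:ℝ)..x, f' y

/-- The `S^{1,2}(ℝ)`-norm of `f` (with weak derivative `f'`), valued in `ℝ≥0∞`. -/
def S12 (f f' : ℝ → ℂ) : ℝ≥0∞ :=
  ⨆ y : ℝ, (∫⁻ x in Set.Ioc y (y + 1),
    ((‖f x‖₊ : ℝ≥0∞) ^ 2 + (‖f' x‖₊ : ℝ≥0∞) ^ 2)) ^ (1/2 : ℝ)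

/-- The averaging operator `A_{n,L}[f]`. -/
def avgOp (f : ℝ → ℂ) (L : ℝ) (n : ℕ) (x : ℝ) : ℂ :=
  (n : ℂ)⁻¹ * ∑ m ∈ Finset.range n, f (x + m * L)

/-- `f` is limit periodic: a uniform limit of continuous periodic functions. -/
def LimitPeriodic (f : ℝ → ℂ) : Prop :=
  ∃ g : ℕ → ℝ → ℂ, (∀ j, Continuous (g j)) ∧
    (∀ j, ∃ P : ℝ, 0 < P ∧ Function.Periodic (g j) P) ∧
    TendstoUniformly g f atTop

/-- The translates of `f` are totally bounded for the uniform distance: for every `ε > 0`, finitely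
many of them form an `ε`-net. -/
def HasTranslateNets (f : ℝ → ℂ) : Prop :=
  ∀ ε : ℝ, 0 < ε → ∃ F : Set ℝ, F.Finite ∧ ∀ s : ℝ, ∃ u ∈ F, ∀ x : ℝ, ‖f (x + s) - f (x + u)‖ < ε

theorem BohrAP.uniformContinuous {f : ℝ → ℂ} (h : BohrAP f) : UniformContinuous f := by
  rw [Metric.uniformContinuous_iff]
  intro ε hε
  obtain ⟨L, hL, hτ⟩ := h.2 (ε / 3) (by positivity)
  -- The margin of `1` leaves room for the second point, at distance `< 1` from one in `[0, L]`.
  have huc : UniformContinuousOn f (Set.Icc (-1) (L + 1)) :=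
    isCompact_Icc.uniformContinuousOn_of_continuous h.1.continuousOn
  obtain ⟨δ, hδ, hf⟩ := Metric.uniformContinuousOn_iff.1 huc (ε / 3) (by positivity)
  refine ⟨min δ 1, by positivity, fun {x y} hxy => ?_⟩
  obtain ⟨τ, hτm, hτx⟩ := hτ (x - L)
  rw [Set.mem_Icc] at hτm
  have hxy1 := abs_lt.1 (hxy.trans_le (min_le_right _ _))
  have hclose := hf (x - τ) ⟨by linarith, by linarith⟩ (y - τ) ⟨by linarith, by linarith⟩
    (by simpa [Real.dist_eq] using hxy.trans_le (min_le_left _ _))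
  have hx := hτx x
  have hy := hτx y
  rw [← dist_eq_norm] at hx hy
  rw [dist_comm] at hx
  linarith [dist_triangle4 (f x) (f (x - τ)) (f (y - τ)) (f y)]

/-- Only the translates by `[0, L]` matter up to `ε / 2`; a uniform continuity modulus `δ` turns a
`δ`-net of that interval into a net of translates. -/
theorem BohrAP.hasTranslateNets {f : ℝ → ℂ} (h : BohrAP f) : HasTranslateNets f := by
  intro ε hε
  obtain ⟨L, hL, hτ⟩ := h.2 (ε / 2) (by positivity)
  obtain ⟨δ, hδ, hf⟩ := Metric.uniformContinuous_iff.1 h.uniformContinuous (ε / 2) (by positivity)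
  obtain ⟨F, hF, hcov⟩ := Metric.totallyBounded_iff.1
    (isCompact_Icc (a := (0 : ℝ)) (b := L)).totallyBounded δ hδ
  refine ⟨F, hF, fun s => ?_⟩
  obtain ⟨τ, hτm, hτx⟩ := hτ (s - L)
  rw [Set.mem_Icc] at hτm
  have hmem : s - τ ∈ Set.Icc 0 L := ⟨by linarith, by linarith⟩
  obtain ⟨u, hu, hsu⟩ := Set.mem_iUnion₂.1 (hcov hmem)
  refine ⟨u, hu, fun x => ?_⟩
  have h1 := hτx (x + s)
  have h2 : dist (f (x + (s - τ))) (f (x + u)) < ε / 2 := hf (by simpa using hsu)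
  rw [← dist_eq_norm, dist_comm, add_sub_assoc] at h1
  rw [← dist_eq_norm]
  linarith [dist_triangle (f (x + s)) (f (x + (s - τ))) (f (x + u))]

theorem HasTranslateNets.bohrAP {f : ℝ → ℂ} (hf : Continuous f) (h : HasTranslateNets f) :
    BohrAP f := by
  refine ⟨hf, fun ε hε => ?_⟩
  obtain ⟨F, hF, hnet⟩ := h ε hε
  obtain ⟨M, hM, hFM⟩ := hF.isBounded.exists_pos_norm_le
  refine ⟨2 * M, by positivity, fun a => ?_⟩
  obtain ⟨u, hu, hx⟩ := hnet (a + M)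
  have huM := abs_le.1 (hFM u hu)
  refine ⟨a + M - u, ⟨by linarith, by linarith⟩, fun x => ?_⟩
  have hxu := hx (x - (a + M))
  rw [norm_sub_rev] at hxu
  rwa [sub_add_cancel, show x - (a + M) + u = x - (a + M - u) by ring] at hxu

theorem HasTranslateNets.exists_subseq {f : ℝ → ℂ} (h : HasTranslateNets f) (x : ℕ → ℝ) :
    ∃ φ : ℕ → ℕ, StrictMono φ ∧
      ∃ g : ℝ → ℂ, TendstoUniformly (fun k t => f (t + x (φ k))) g atTop := by
  let T : ℝ → UniformFun ℝ ℂ := fun s => UniformFun.ofFun fun t => f (t + s)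
  have htb : TotallyBounded (Set.range T) := by
    rw [(UniformFun.hasBasis_uniformity_of_basis ℝ ℂ Metric.uniformity_basis_dist).totallyBounded_iff]
    intro ε hε
    obtain ⟨F, hF, hnet⟩ := h ε hε
    refine ⟨T '' F, hF.image T, ?_⟩
    rintro _ ⟨s, rfl⟩
    obtain ⟨u, hu, hsu⟩ := hnet s
    refine Set.mem_iUnion₂.2 ⟨T u, Set.mem_image_of_mem T hu, fun t => ?_⟩
    simpa [T, dist_eq_norm] using hsu t
  have hcpt : IsCompact (closure (Set.range T)) :=
    htb.closure.isCompact_of_isClosed isClosed_closure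
  obtain ⟨g, -, φ, hφ, hlim⟩ :=
    hcpt.isSeqCompact (x := fun n => T (x n)) fun n => subset_closure (Set.mem_range_self _)
  exact ⟨φ, hφ, UniformFun.toFun g, UniformFun.tendsto_iff_tendstoUniformly.1 hlim⟩

theorem HasTranslateNets.of_exists_subseq {f : ℝ → ℂ}
    (h : ∀ x : ℕ → ℝ, ∃ φ : ℕ → ℕ, StrictMono φ ∧
      ∃ g : ℝ → ℂ, TendstoUniformly (fun k t => f (t + x (φ k))) g atTop) :
    HasTranslateNets f := by
  intro ε hε
  by_contra! hno
  obtain ⟨x, hx⟩ := Set.seq_of_forall_finite_exists hno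
  obtain ⟨φ, hφ, g, hg⟩ := h x
  obtain ⟨N, hN⟩ := eventually_atTop.1 (Metric.tendstoUniformly_iff.1 hg (ε / 2) (by positivity))
  obtain ⟨t, ht⟩ := hx (φ (N + 1)) (x (φ N)) ⟨φ N, hφ N.lt_succ_self, rfl⟩
  rw [← dist_eq_norm] at ht
  linarith [hN N le_rfl t, hN (N + 1) N.le_succ t,
    dist_triangle_left (f (t + x (φ (N + 1)))) (f (t + x (φ N))) (g t)]

/-- a continuous function is Bohr almost periodic iff it is normal. -/
theorem bohrAP_iff_normal (f : ℝ → ℂ) (hf : Continuous f) :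
    BohrAP f ↔
      ∀ x : ℕ → ℝ, ∃ φ : ℕ → ℕ, StrictMono φ ∧
        ∃ g : ℝ → ℂ, TendstoUniformly (fun k t => f (t + x (φ k))) g atTop := by
  exact ⟨fun h => h.hasTranslateNets.exists_subseq,
    fun h => (HasTranslateNets.of_exists_subseq h).bohrAP hf⟩
end
end

section
/- Let g : ℝ → ℂ have a weak derivative g′ with finite S^{1,2}-norm, and let L > 0. Suppose the averages A_{n,L}[g] converge uniformly on ℝ, as n → ∞, to a function h : ℝ → ℂ. Then h admits a weak derivative h′ and ‖h‖_{S^{1,2}} ≤ ‖g‖_{S^{1,2}}. -/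
/-!
Write the local energy of a pair `(f, f')` as `∫_y^{y+1} (|f|² + |f'|²)`; a bound on it for all `y`
is a translation-invariant condition, convex in the pair, and the whole proof rests on that.

* Averaging the translates of `(f, f')` against any probability measure preserves the bound: Jensen
  pointwise, then Tonelli (`energy_average_le`). For the measure `n⁻¹ ∑_{m<n} δ_{mL}` this bounds
  `(A_{n,L}[g], A_{n,L}[g'])`, and `A_{n,L}[g']` is a weak derivative of `A_{n,L}[g]`.
* The energy bound controls the modulus of absolute continuity
  (`HasWeakDeriv.sum_edist_le`), so it passes to the limit `h`. By Lebesgue's theorem `h` is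
  differentiable almost everywhere, and `deriv h` is a weak derivative of it.
* For the uniform measure on `(0, t]` the average of `f'` is the difference quotient
  `t⁻¹ (f (x + t) - f x)`, which, unlike `f'`, converges when `f` converges pointwise. So the energy
  of the averaged pair is bounded for `h` by Fatou, and letting `t → 0`, Fatou again bounds the
  energy of `(h, deriv h)` by the same constant. No weak compactness in `L²` is needed.
-/


open MeasureTheory Filter Topology
open scoped ENNReal NNReal

noncomputable section

/-! ### Averaging and the local energy -/

/-- Jensen's inequality for the square, with respect to a probability measure. -/
lemma enorm_integral_sq_le (ν : Measure ℝ) [IsProbabilityMeasure ν] (φ : ℝ → ℂ)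
    (hφ : AEStronglyMeasurable φ ν) :
    ‖∫ s, φ s ∂ν‖ₑ ^ 2 ≤ ∫⁻ s, ‖φ s‖ₑ ^ 2 ∂ν := by
  have h1 : ‖∫ s, φ s ∂ν‖ₑ ≤ ∫⁻ s, ‖φ s‖ₑ ∂ν := enorm_integral_le_lintegral_enorm _
  have h2 := eLpNorm'_le_eLpNorm'_of_exponent_le (p := 1) (q := 2) one_pos one_le_two ν hφ
  simp only [eLpNorm', ENNReal.rpow_one, div_one, ENNReal.rpow_ofNat] at h2
  calc _ ≤ ((∫⁻ s, ‖φ s‖ₑ ^ 2 ∂ν) ^ (1 / 2 : ℝ)) ^ 2 := by gcongr; exact h1.trans h2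
    _ = _ := by
      rw [← ENNReal.rpow_natCast, ← ENNReal.rpow_mul]; norm_num

/-- Averaging the translates of `f` and `f'` against a probability measure does not increase the
bound on the local energy: Jensen pointwise, then Tonelli, as the bound is translation invariant. -/
lemma energy_average_le (f f' : ℝ → ℂ) (hf : Measurable f) (hf' : Measurable f') (C : ℝ≥0∞)
    (hC : ∀ y : ℝ, ∫⁻ x in Set.Ioc y (y + 1), (‖f x‖ₑ ^ 2 + ‖f' x‖ₑ ^ 2) ≤ C)
    (ν : Measure ℝ) [IsProbabilityMeasure ν] (y : ℝ) :
    ∫⁻ x in Set.Ioc y (y + 1),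
      (‖∫ s, f (x + s) ∂ν‖ₑ ^ 2 + ‖∫ s, f' (x + s) ∂ν‖ₑ ^ 2) ≤ C := by
  calc _ ≤ ∫⁻ x in Set.Ioc y (y + 1), ∫⁻ s, (‖f (x + s)‖ₑ ^ 2 + ‖f' (x + s)‖ₑ ^ 2) ∂ν := by
        gcongr with x
        rw [lintegral_add_left (by fun_prop)]
        gcongr
        · exact enorm_integral_sq_le ν (fun s => f (x + s))
            (hf.comp (measurable_const_add x)).aestronglyMeasurable
        · exact enorm_integral_sq_le ν (fun s => f' (x + s))
            (hf'.comp (measurable_const_add x)).aestronglyMeasurable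
    _ = ∫⁻ s, (∫⁻ x in Set.Ioc y (y + 1), (‖f (x + s)‖ₑ ^ 2 + ‖f' (x + s)‖ₑ ^ 2)) ∂ν :=
        lintegral_lintegral_swap (f := fun x s => ‖f (x + s)‖ₑ ^ 2 + ‖f' (x + s)‖ₑ ^ 2)
          (by unfold Function.uncurry; fun_prop)
    _ ≤ ∫⁻ _, C ∂ν := by
        refine lintegral_mono fun s => ?_
        refine le_trans (le_of_eq ?_) (hC (y + s))
        have hp := (measurePreserving_add_right (volume : Measure ℝ) s).setLIntegral_comp_preimage
          (s := Set.Ioc (y + s) (y + s + 1)) measurableSet_Ioc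
          (f := fun x => ‖f x‖ₑ ^ 2 + ‖f' x‖ₑ ^ 2) (by fun_prop)
        rw [← hp, Set.preimage_add_const_Ioc]
        congr 3 <;> ring
    _ = C := by simp

/-! ### Weak derivatives -/

lemma HasWeakDeriv.intervalIntegrable {f f' : ℝ → ℂ} (hf : HasWeakDeriv f f') (a b : ℝ) :
    IntervalIntegrable f' volume a b :=
  (hf.1.integrableOn_isCompact isCompact_uIcc).intervalIntegrable

lemma HasWeakDeriv.sub_eq {f f' : ℝ → ℂ} (hf : HasWeakDeriv f f') (a b : ℝ) :
    f b - f a = ∫ y in a..b, f' y := by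
  rw [hf.2 b, hf.2 a, ← intervalIntegral.integral_interval_sub_left
    (hf.intervalIntegrable 0 b) (hf.intervalIntegrable 0 a)]
  ring

lemma HasWeakDeriv.continuous {f f' : ℝ → ℂ} (hf : HasWeakDeriv f f') : Continuous f := by
  have : f = fun x => f 0 + ∫ y in (0:ℝ)..x, f' y := funext hf.2
  rw [this]
  exact continuous_const.add
    (intervalIntegral.continuous_primitive (fun a b => hf.intervalIntegrable a b) 0)

/-! ### The two averaging measures -/

/-- The uniform probability measure on `(0, t]`, for `t > 0`. -/
def unifMeas (t : ℝ) : Measure ℝ := (ENNReal.ofReal t)⁻¹ • volume.restrict (Set.Ioc 0 t)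

lemma isProbabilityMeasure_unifMeas {t : ℝ} (ht : 0 < t) : IsProbabilityMeasure (unifMeas t) := by
  constructor
  simp only [unifMeas, Measure.smul_apply, Measure.restrict_apply MeasurableSet.univ,
    Set.univ_inter, Real.volume_Ioc, sub_zero, smul_eq_mul]
  exact ENNReal.inv_mul_cancel (by simpa using ht) (by simp)

lemma integral_unifMeas {t : ℝ} (ht : 0 < t) (φ : ℝ → ℂ) (x : ℝ) :
    ∫ s, φ (x + s) ∂(unifMeas t) = t⁻¹ • ∫ s in x..(x + t), φ s := by
  rw [unifMeas, integral_smul_measure, ← intervalIntegral.integral_of_le ht.le,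
    intervalIntegral.integral_comp_add_left]
  simp [ht.le]

lemma isProbabilityMeasure_diracAvg (L : ℝ) {n : ℕ} (hn : n ≠ 0) : IsProbabilityMeasure
    ((n : ℝ≥0∞)⁻¹ • ∑ m ∈ Finset.range n, Measure.dirac ((m : ℝ) * L)) := by
  constructor
  simp only [Measure.smul_apply, Measure.finsetSum_apply, measure_univ, smul_eq_mul]
  simp only [Finset.sum_const, Finset.card_range, nsmul_eq_mul, mul_one]
  exact ENNReal.inv_mul_cancel (by simpa using hn) (by simp)

lemma integral_diracAvg (L : ℝ) (n : ℕ) (φ : ℝ → ℂ) (x : ℝ) :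
    ∫ s, φ (x + s) ∂((n : ℝ≥0∞)⁻¹ • ∑ m ∈ Finset.range n, Measure.dirac ((m : ℝ) * L))
      = avgOp φ L n x := by
  rw [integral_smul_measure, integral_finsetSum_measure]
  · simp [avgOp]
  · intro i _
    exact integrable_dirac (by simp)

lemma locallyIntegrable_of_intervalIntegrable {f : ℝ → ℂ}
    (hf : ∀ a b, IntervalIntegrable f volume a b) : LocallyIntegrable f volume := by
  refine locallyIntegrable_iff.2 fun k hk => ?_
  obtain ⟨R, hR⟩ := hk.isBounded.subset_closedBall 0
  rw [Real.closedBall_eq_Icc] at hR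
  refine IntegrableOn.mono_set ?_ hR
  by_cases h : 0 - R ≤ 0 + R
  · exact (intervalIntegrable_iff_integrableOn_Icc_of_le h).1 (hf _ _)
  · rw [Set.Icc_eq_empty h]
    exact integrableOn_empty

lemma HasWeakDeriv.average {f f' : ℝ → ℂ} (hf : HasWeakDeriv f f') (L : ℝ) (n : ℕ) :
    HasWeakDeriv (avgOp f L n) (avgOp f' L n) := by
  have hi : ∀ (c a b : ℝ), IntervalIntegrable (fun x => f' (x + c)) volume a b := fun c a b => by
    simpa using (hf.intervalIntegrable (a + c) (b + c)).comp_add_right c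
  have hint : ∀ a b, IntervalIntegrable (avgOp f' L n) volume a b := fun a b => by
    unfold avgOp
    refine IntervalIntegrable.const_mul ?_ _
    have := IntervalIntegrable.sum (μ := volume) (a := a) (b := b) (Finset.range n)
      (f := fun m x => f' (x + m * L)) (fun m _ => hi _ _ _)
    simpa [Finset.sum_fn] using this
  constructor
  · exact locallyIntegrable_of_intervalIntegrable hint
  · intro x
    unfold avgOp
    rw [intervalIntegral.integral_const_mul,
      intervalIntegral.integral_finsetSum (fun m _ => hi _ _ _), ← mul_add,
      ← Finset.sum_add_distrib]
    congr 1
    refine Finset.sum_congr rfl fun m _ => ?_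
    rw [intervalIntegral.integral_comp_add_right, ← hf.sub_eq]
    simp

/-! ### Absolute continuity from the energy bound -/

lemma lintegral_Ioc_nat_le (F : ℝ → ℝ≥0∞) (C : ℝ≥0∞)
    (hC : ∀ y : ℝ, ∫⁻ x in Set.Ioc y (y + 1), F x ≤ C) (y : ℝ) (N : ℕ) :
    ∫⁻ x in Set.Ioc y (y + N), F x ≤ N * C := by
  induction N with
  | zero => simp
  | succ N ih =>
    have : Set.Ioc y (y + (N + 1 : ℕ)) = Set.Ioc y (y + N) ∪ Set.Ioc (y + N) (y + N + 1) := by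
      rw [Set.Ioc_union_Ioc_eq_Ioc (by simp) (by linarith)]
      push_cast; congr 1; ring
    rw [this]
    refine (lintegral_union_le _ _ _).trans ?_
    push_cast
    rw [add_mul, one_mul]
    exact add_le_add ih (hC _)

lemma le_add_inv_mul_sq (x : ℝ≥0∞) {K : ℝ≥0∞} (h0 : K ≠ 0) (hK : K ≠ ⊤) :
    x ≤ K + K⁻¹ * x ^ 2 := by
  rcases le_total x K with h | h
  · exact h.trans le_self_add
  · refine le_trans ?_ le_add_self
    calc x = K⁻¹ * (K * x) := by rw [← mul_assoc, ENNReal.inv_mul_cancel h0 hK, one_mul]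
      _ ≤ K⁻¹ * (x * x) := by gcongr
      _ = _ := by rw [sq]

/-- A quantitative form of absolute continuity depending only on the energy bound `C`, hence
stable under pointwise limits. The parameter `K` splits `‖f'‖ ≤ K + ‖f'‖² / K`. -/
lemma HasWeakDeriv.sum_edist_le {f f' : ℝ → ℂ} (hf : HasWeakDeriv f f') (C : ℝ≥0∞)
    (hC : ∀ y : ℝ, ∫⁻ x in Set.Ioc y (y + 1), (‖f x‖ₑ ^ 2 + ‖f' x‖ₑ ^ 2) ≤ C)
    {a b : ℝ} {K : ℝ≥0∞} (h0 : K ≠ 0) (hK : K ≠ ⊤)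
    {E : ℕ × (ℕ → ℝ × ℝ)} (hE : E ∈ AbsolutelyContinuousOnInterval.disjWithin a b) :
    ∑ i ∈ Finset.range E.1, edist (f (E.2 i).1) (f (E.2 i).2) ≤
      K * (∑ i ∈ Finset.range E.1, edist (E.2 i).1 (E.2 i).2) + K⁻¹ * (⌈|b - a|⌉₊ * C) := by
  set U : Set ℝ := ⋃ i ∈ Finset.range E.1, Set.uIoc (E.2 i).1 (E.2 i).2 with hU
  have hUab : U ⊆ Set.Ioc (min a b) (min a b + ⌈|b - a|⌉₊) := by
    refine (AbsolutelyContinuousOnInterval.biUnion_uIoc_subset_of_mem_disjWithin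
      (n := E.1) (I := E.2) hE).trans ?_
    refine Set.Ioc_subset_Ioc_right ?_
    have := Nat.le_ceil |b - a|
    have h2 := max_sub_min_eq_abs' a b
    rw [abs_sub_comm] at h2
    linarith
  have hsum : ∀ F : ℝ → ℝ≥0∞, ∫⁻ x in U, F x =
      ∑ i ∈ Finset.range E.1, ∫⁻ x in Set.uIoc (E.2 i).1 (E.2 i).2, F x := fun F =>
    lintegral_biUnion_finset hE.2 (fun _ _ => measurableSet_uIoc) F
  calc _ ≤ ∑ i ∈ Finset.range E.1, ∫⁻ x in Set.uIoc (E.2 i).1 (E.2 i).2, ‖f' x‖ₑ := by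
        refine Finset.sum_le_sum fun i _ => ?_
        rw [edist_comm, edist_eq_enorm_sub, hf.sub_eq, ← ofReal_norm,
          intervalIntegral.norm_integral_eq_norm_integral_uIoc, ofReal_norm]
        exact enorm_integral_le_lintegral_enorm _
    _ = ∫⁻ x in U, ‖f' x‖ₑ := (hsum _).symm
    _ ≤ ∫⁻ x in U, (K + K⁻¹ * (‖f x‖ₑ ^ 2 + ‖f' x‖ₑ ^ 2)) := by
        gcongr with x
        refine (le_add_inv_mul_sq _ h0 hK).trans ?_
        gcongr
        exact le_add_self
    _ = (∫⁻ x in U, K) + K⁻¹ * ∫⁻ x in U, (‖f x‖ₑ ^ 2 + ‖f' x‖ₑ ^ 2) := by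
        rw [lintegral_add_left measurable_const, lintegral_const_mul' _ _ (by simpa using h0)]
    _ ≤ _ := by
        gcongr
        · rw [hsum, Finset.mul_sum]
          refine Finset.sum_le_sum fun i _ => ?_
          simp [edist_dist, Real.dist_eq, abs_sub_comm]
        · exact (lintegral_mono_set hUab).trans (lintegral_Ioc_nat_le _ C hC _ _)

/-! ### Passage to the limit -/

/-- Fatou's lemma for the local energy. -/
lemma energy_le_of_tendsto {p q : ℕ → ℝ → ℂ} {P Q : ℝ → ℂ} (C : ℝ≥0∞) {s : Set ℝ}
    (hp : ∀ k, Measurable (p k)) (hq : ∀ k, Measurable (q k))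
    (hC : ∀ k, ∫⁻ x in s, (‖p k x‖ₑ ^ 2 + ‖q k x‖ₑ ^ 2) ≤ C)
    (hP : ∀ᵐ x, Tendsto (fun k => p k x) atTop (𝓝 (P x)))
    (hQ : ∀ᵐ x, Tendsto (fun k => q k x) atTop (𝓝 (Q x))) :
    ∫⁻ x in s, (‖P x‖ₑ ^ 2 + ‖Q x‖ₑ ^ 2) ≤ C := by
  calc _ = ∫⁻ x in s, liminf (fun k => ‖p k x‖ₑ ^ 2 + ‖q k x‖ₑ ^ 2) atTop := by
        refine lintegral_congr_ae (ae_restrict_of_ae ?_)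
        filter_upwards [hP, hQ] with x hx1 hx2
        exact (((ENNReal.continuous_pow 2).tendsto _ |>.comp hx1.enorm).add
          ((ENNReal.continuous_pow 2).tendsto _ |>.comp hx2.enorm)).liminf_eq.symm
    _ ≤ liminf (fun k => ∫⁻ x in s, (‖p k x‖ₑ ^ 2 + ‖q k x‖ₑ ^ 2)) atTop :=
        lintegral_liminf_le fun k => by have := hp k; have := hq k; fun_prop
    _ ≤ C := liminf_le_of_le (by isBoundedDefault) fun b hb => by
        obtain ⟨k, hk⟩ := hb.exists
        exact hk.trans (hC k)

/-- A function that is absolutely continuous on all compact intervals has its pointwise derivative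
as a weak derivative. -/
lemma hasWeakDeriv_deriv {h : ℝ → ℂ} (hac : ∀ a b, AbsolutelyContinuousOnInterval h a b) :
    (∀ᵐ x, DifferentiableAt ℝ h x) ∧ HasWeakDeriv h (deriv h) := by
  have hlip : ∀ φ : ℂ →L[ℝ] ℝ, ‖φ‖ ≤ 1 → ∀ a b,
      AbsolutelyContinuousOnInterval (fun x => φ (h x)) a b := fun φ hφ a b => by
    refine squeeze_zero (fun E => Finset.sum_nonneg fun _ _ => dist_nonneg) (fun E => ?_) (hac a b)
    refine Finset.sum_le_sum fun i _ => ?_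
    rw [dist_eq_norm, dist_eq_norm, ← map_sub]
    exact (φ.le_opNorm _).trans (mul_le_of_le_one_left (norm_nonneg _) hφ)
  have hre := hlip Complex.reCLM (by simp)
  have him := hlip Complex.imCLM (by simp)
  simp only [Complex.reCLM_apply, Complex.imCLM_apply] at hre him
  have hae : ∀ φ : ℝ → ℝ, (∀ a b, AbsolutelyContinuousOnInterval φ a b) →
      ∀ᵐ x, DifferentiableAt ℝ φ x := fun φ hφ => by
    have h1 : ∀ᵐ x, ∀ n : ℕ, x ∈ Set.uIcc (-(n:ℝ)) n → DifferentiableAt ℝ φ x :=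
      ae_all_iff.2 fun n => (hφ (-n) n).ae_differentiableAt
    filter_upwards [h1] with x hx
    obtain ⟨n, hn⟩ := exists_nat_ge |x|
    exact hx n (by rw [Set.uIcc_of_le (by simp)]; exact abs_le.1 hn)
  have hcongr : ∀ x, h x = ((h x).re : ℂ) + (h x).im * Complex.I := fun x => by simp
  have hD : ∀ᵐ x, HasDerivAt h (((deriv (fun x => (h x).re) x : ℝ) : ℂ)
      + ((deriv (fun x => (h x).im) x : ℝ) : ℂ) * Complex.I) x := by
    filter_upwards [hae _ hre, hae _ him] with x h1 h2
    have := h1.hasDerivAt.ofReal_comp.add (h2.hasDerivAt.ofReal_comp.mul_const Complex.I)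
    exact this.congr_of_eventuallyEq (Eventually.of_forall hcongr)
  have hd : deriv h =ᵐ[volume] fun x => ((deriv (fun x => (h x).re) x : ℝ) : ℂ)
      + ((deriv (fun x => (h x).im) x : ℝ) : ℂ) * Complex.I := hD.mono fun x hx => hx.deriv
  have hi1 : ∀ a b, IntervalIntegrable (fun x => ((deriv (fun x => (h x).re) x : ℝ) : ℂ)) volume a b :=
    fun a b => ⟨(hre a b).intervalIntegrable_deriv.1.ofReal, (hre a b).intervalIntegrable_deriv.2.ofReal⟩
  have hi2 : ∀ a b, IntervalIntegrable
      (fun x => ((deriv (fun x => (h x).im) x : ℝ) : ℂ) * Complex.I) volume a b :=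
    fun a b => IntervalIntegrable.mul_const ⟨(him a b).intervalIntegrable_deriv.1.ofReal,
      (him a b).intervalIntegrable_deriv.2.ofReal⟩ _
  refine ⟨hD.mono fun x hx => hx.differentiableAt,
    locallyIntegrable_of_intervalIntegrable fun a b =>
      ((hi1 a b).add (hi2 a b)).congr_ae (ae_restrict_of_ae hd.symm), fun x => ?_⟩
  rw [intervalIntegral.integral_congr_ae (hd.mono fun x hx _ => hx),
    intervalIntegral.integral_add (hi1 _ _) (hi2 _ _), intervalIntegral.integral_mul_const,
    intervalIntegral.integral_ofReal, intervalIntegral.integral_ofReal,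
    (hre 0 x).integral_deriv_eq_sub, (him 0 x).integral_deriv_eq_sub]
  apply Complex.ext <;> simp

/-- A bound `C` on the local energy is preserved by uniform limits, the weak
derivative of the limit being its pointwise derivative.
The energy of the limit is controlled through its averaged difference quotients
`t⁻¹ (h (x + t) - h x)` together with the matching averages `t⁻¹ ∫_x^{x+t} h`; pairing the two
keeps the constant `C`. -/
lemma exists_hasWeakDeriv_of_tendstoUniformly {f f' : ℕ → ℝ → ℂ} {h : ℝ → ℂ} (C : ℝ≥0∞)
    (hCtop : C ≠ ⊤) (hf : ∀ n, HasWeakDeriv (f n) (f' n)) (hm : ∀ n, Measurable (f' n))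
    (hC : ∀ n (y : ℝ), ∫⁻ x in Set.Ioc y (y + 1), (‖f n x‖ₑ ^ 2 + ‖f' n x‖ₑ ^ 2) ≤ C)
    (hlim : TendstoUniformly f h atTop) :
    ∃ h' : ℝ → ℂ, HasWeakDeriv h h' ∧
      ∀ y : ℝ, ∫⁻ x in Set.Ioc y (y + 1), (‖h x‖ₑ ^ 2 + ‖h' x‖ₑ ^ 2) ≤ C := by
  have hcont : Continuous h :=
    hlim.continuous (Frequently.of_forall fun n => (hf n).continuous)
  have hac : ∀ a b, AbsolutelyContinuousOnInterval h a b := fun a b => by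
    rw [absolutelyContinuousOnInterval_iff]
    intro ε hε
    obtain ⟨A, hA⟩ : ∃ A : ℝ≥0, (A : ℝ≥0∞) = ⌈|b - a|⌉₊ * C :=
      ⟨_, ENNReal.coe_toNNReal (ENNReal.mul_ne_top (by simp) hCtop)⟩
    -- `K` makes the energy term `A / K` less than `ε / 2`; then `δ` makes `K δ` equal to `ε / 2`.
    set K : ℝ := 2 * (A + 1) / ε with hKdef
    have hK : 0 < K := by positivity
    have hAK : K⁻¹ * A < ε / 2 := by
      rw [hKdef, inv_div, div_mul_eq_mul_div, div_lt_div_iff₀ (by positivity) two_pos]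
      nlinarith [A.2]
    refine ⟨ε / (2 * K), by positivity, fun E hE hEδ => ?_⟩
    have hlt : ∑ i ∈ Finset.range E.1, edist (h (E.2 i).1) (h (E.2 i).2) ≤
        ENNReal.ofReal K * (∑ i ∈ Finset.range E.1, edist (E.2 i).1 (E.2 i).2)
          + (ENNReal.ofReal K)⁻¹ * (⌈|b - a|⌉₊ * C) := by
      refine le_of_tendsto' (tendsto_finsetSum _ fun i _ =>
        (hlim.tendsto_at _).edist (hlim.tendsto_at _)) fun n =>
        (hf n).sum_edist_le C (hC n) (by simpa using hK) (by simp) hE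
    rw [← hA, ← ENNReal.ofReal_inv_of_pos hK, ← ENNReal.ofReal_coe_nnreal] at hlt
    simp only [edist_dist] at hlt
    rw [← ENNReal.ofReal_sum_of_nonneg (fun _ _ => dist_nonneg),
      ← ENNReal.ofReal_sum_of_nonneg (fun _ _ => dist_nonneg),
      ← ENNReal.ofReal_mul hK.le, ← ENNReal.ofReal_mul (by positivity),
      ← ENNReal.ofReal_add (mul_nonneg hK.le (Finset.sum_nonneg fun _ _ => dist_nonneg))
        (by positivity),
      ENNReal.ofReal_le_ofReal_iff (add_nonneg
        (mul_nonneg hK.le (Finset.sum_nonneg fun _ _ => dist_nonneg)) (by positivity))] at hlt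
    have h3 : K * ∑ i ∈ Finset.range E.1, dist (E.2 i).1 (E.2 i).2 < ε / 2 := by
      calc _ < K * (ε / (2 * K)) := by gcongr
        _ = ε / 2 := by field_simp
    linarith
  obtain ⟨hdiff, hweak⟩ := hasWeakDeriv_deriv hac
  refine ⟨deriv h, hweak, fun y => ?_⟩
  have hprim : ∀ {φ : ℝ → ℂ}, Continuous φ → ∀ t : ℝ,
      Continuous fun x => t⁻¹ • ∫ s in x..(x + t), φ s := fun {φ} hφ t => by
    have : ∀ x, ∫ s in x..(x + t), φ s = (∫ s in 0..(x + t), φ s) - ∫ s in 0..x, φ s := fun x =>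
      (intervalIntegral.integral_interval_sub_left (hφ.intervalIntegrable _ _)
        (hφ.intervalIntegrable _ _)).symm
    simp only [this]
    have hc := intervalIntegral.continuous_primitive (fun a b => hφ.intervalIntegrable a b) 0
      (μ := volume)
    exact ((hc.comp (continuous_id.add continuous_const)).sub hc).const_smul t⁻¹
  have hstep : ∀ t : ℝ, 0 < t → ∫⁻ x in Set.Ioc y (y + 1),
      (‖t⁻¹ • ∫ s in x..(x + t), h s‖ₑ ^ 2 + ‖t⁻¹ • (h (x + t) - h x)‖ₑ ^ 2) ≤ C := by
    intro t ht
    have := isProbabilityMeasure_unifMeas ht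
    refine energy_le_of_tendsto (p := fun n x => t⁻¹ • ∫ s in x..(x + t), f n s)
      (q := fun n x => t⁻¹ • (f n (x + t) - f n x)) C
      (fun n => (hprim (hf n).continuous t).measurable) (fun n => ?_) (fun n => ?_)
      (ae_of_all _ fun x => ?_) (ae_of_all _ fun x => ?_)
    · have := (hf n).continuous
      exact Continuous.measurable (by fun_prop)
    · have := energy_average_le (f n) (f' n) (hf n).continuous.measurable (hm n) C (hC n)
        (unifMeas t) y
      simpa only [integral_unifMeas ht, (hf n).sub_eq] using this
    · exact (TendstoUniformlyOn.tendsto_intervalIntegral_of_continuousOn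
        (Eventually.of_forall fun n => (hf n).continuous.continuousOn)
        hlim.tendstoUniformlyOn).const_smul _
    · exact ((hlim.tendsto_at _).sub (hlim.tendsto_at _)).const_smul _
  have hseq : Tendsto (fun k : ℕ => (1 : ℝ) / (k + 1)) atTop (𝓝[≠] 0) :=
    tendsto_nhdsWithin_iff.2 ⟨tendsto_one_div_add_atTop_nhds_zero_nat,
      Eventually.of_forall fun k => by
        have : (0:ℝ) < 1 / (k + 1) := by positivity
        exact this.ne'⟩
  refine energy_le_of_tendsto
    (p := fun (k : ℕ) x => ((1 : ℝ) / (k + 1))⁻¹ • ∫ s in x..(x + 1 / (k + 1)), h s)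
    (q := fun (k : ℕ) x => ((1 : ℝ) / (k + 1))⁻¹ • (h (x + 1 / (k + 1)) - h x)) C
    (fun k => (hprim hcont _).measurable) (fun k => Continuous.measurable (by fun_prop))
    (fun k => hstep _ (by positivity)) (ae_of_all _ fun x => ?_) ?_
  · have := (hasDerivAt_iff_tendsto_slope_zero.1
      (intervalIntegral.integral_hasDerivAt_right (hcont.intervalIntegrable x x)
        hcont.aestronglyMeasurable.stronglyMeasurableAtFilter hcont.continuousAt)).comp hseq
    simpa [Function.comp_def] using this
  · filter_upwards [hdiff] with x hx
    exact (hasDerivAt_iff_tendsto_slope_zero.1 hx.hasDerivAt).comp hseq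

/-- the periodization (uniform limit of averages) of a function with finite
`S^{1,2}`-norm has a weak derivative and no larger `S^{1,2}`-norm. -/
theorem periodization_S12_le (g g' : ℝ → ℂ) (hg : HasWeakDeriv g g')
    (hfin : S12 g g' ≠ ⊤) (L : ℝ) (hL : 0 < L) (h : ℝ → ℂ)
    (hconv : TendstoUniformly (fun n x => avgOp g L n x) h atTop) :
    ∃ h' : ℝ → ℂ, HasWeakDeriv h h' ∧ S12 h h' ≤ S12 g g' := by
  obtain ⟨hloc, hFTC⟩ := hg
  -- A Borel representative of `g'`, so that Tonelli applies to every averaging measure.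
  obtain ⟨k, hk, hgk⟩ := hloc.aestronglyMeasurable
  have hwk : HasWeakDeriv g k := by
    refine ⟨(locallyIntegrable_congr hgk).1 hloc, fun x => ?_⟩
    rw [hFTC x, intervalIntegral.integral_congr_ae (hgk.mono fun x hx _ => hx)]
  have hC : ∀ y : ℝ, ∫⁻ x in Set.Ioc y (y + 1), (‖g x‖ₑ ^ 2 + ‖k x‖ₑ ^ 2) ≤ S12 g g' ^ 2 := by
    intro y
    have h1 : (∫⁻ x in Set.Ioc y (y + 1), (‖g x‖ₑ ^ 2 + ‖k x‖ₑ ^ 2)) ^ (1/2 : ℝ) ≤ S12 g g' := by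
      refine le_trans (le_of_eq ?_) (le_iSup _ y)
      congr 1
      refine lintegral_congr_ae (ae_restrict_of_ae (hgk.mono fun x hx => ?_))
      simp only [hx]; rfl
    calc _ = ((∫⁻ x in Set.Ioc y (y + 1), (‖g x‖ₑ ^ 2 + ‖k x‖ₑ ^ 2)) ^ (1/2 : ℝ)) ^ 2 := by
          rw [← ENNReal.rpow_natCast, ← ENNReal.rpow_mul]; norm_num
      _ ≤ _ := by gcongr
  -- The index is shifted because `A_{0,L}` is not an average.
  obtain ⟨h', hh', hle⟩ := exists_hasWeakDeriv_of_tendstoUniformly (h := h)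
    (f := fun n => avgOp g L (n + 1)) (f' := fun n => avgOp k L (n + 1))
    (S12 g g' ^ 2) (ENNReal.pow_ne_top hfin) (fun n => hwk.average L (n + 1))
    (fun n => by have := hk.measurable; unfold avgOp; fun_prop)
    (fun n y => by
      have := isProbabilityMeasure_diracAvg L (Nat.succ_ne_zero n)
      simpa only [integral_diracAvg] using energy_average_le g k hwk.continuous.measurable
        hk.measurable _ hC (((n + 1 : ℕ) : ℝ≥0∞)⁻¹ •
          ∑ m ∈ Finset.range (n + 1), Measure.dirac ((m : ℝ) * L)) y)
    (fun u hu => (tendsto_add_atTop_nat 1).eventually (hconv u hu))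
  refine ⟨h', hh', iSup_le fun y => ?_⟩
  calc _ ≤ (S12 g g' ^ 2) ^ (1/2 : ℝ) := ENNReal.rpow_le_rpow (hle y) (by norm_num)
    _ = _ := by rw [← ENNReal.rpow_natCast, ← ENNReal.rpow_mul]; norm_num
end
end
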